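/- Let $R_0$ be a domain, $\mathfrak{f} \geq 4$, $R = R_0[x_{i,j}]$, $I = \operatorname{Pf}_4(\mathbf{X})$, $A = R/I$, $F = R^{\mathfrak f}$. Then the complex $\bigwedge^3 \bar F^* \xrightarrow{\bar d_1} \bar F^* \xrightarrow{\bar d_0} \bar F \xrightarrow{\bar\delta_1} \bigwedge^3 \bar F$ over $A$ is exact, where $d_1(\phi_3) = \xi(\phi_3)$, $d_0(\phi_1) = \phi_1(\xi)$, and $\delta_1(f_1) = f_1 \wedge \xi$, with $\xi = \sum_{i<j} x_{i,j}\, e_i \wedge e_j \in \bigwedge^2 F$. -/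

import Mathlib

open CategoryTheory

noncomputable section
namespace AluffiStmt

universe u

/-- The index set for the entries of a generic `f × f` alternating matrix:
pairs `(i, j)` with `i < j`. -/
abbrev P2 (f : ℕ) := {p : Fin f × Fin f // p.1 < p.2}

/-- `l` is a (weakly) regular sequence on `R`: each entry is a nonzerodivisor
modulo the ideal generated by the previous entries. -/
def IsRegSeq (R : Type*) [CommRing R] (l : List R) : Prop :=
  ∀ (i : ℕ) (h : i < l.length) (x : R),
    l.get ⟨i, h⟩ * x ∈ Ideal.span {y | y ∈ l.take i} →
      x ∈ Ideal.span {y | y ∈ l.take i}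

/-- The grade of an ideal: the supremum of lengths of regular sequences on `R`
contained in `I`. -/
def grade {R : Type*} [CommRing R] (I : Ideal R) : ℕ :=
  sSup {n | ∃ l : List R, l.length = n ∧ (∀ r ∈ l, r ∈ I) ∧ IsRegSeq R l}

/-- Projective dimension at most `n`, expressed by vanishing of `Ext^i (M, -)`
for all `i > n`. -/
def projDimLE (R : Type u) [CommRing R] (M : ModuleCat.{u} R) (n : ℕ) : Prop :=
  ∀ (N : ModuleCat.{u} R) (i : ℕ), n < i →
    Subsingleton (((Ext R (ModuleCat.{u} R) i).obj (Opposite.op M)).obj N)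

/-- `M` has projective dimension exactly `n`. -/
def projDimEq (R : Type u) [CommRing R] (M : ModuleCat.{u} R) (n : ℕ) : Prop :=
  projDimLE R M n ∧ ∀ k : ℕ, projDimLE R M k → n ≤ k

/-- An ideal `I` is perfect if `grade I = pd_R (R/I)`. -/
def IsPerfectIdeal (R : Type u) [CommRing R] (I : Ideal R) : Prop :=
  projDimEq R (ModuleCat.of R (R ⧸ I)) (grade I)
/-- The `(i,j)` entry of the generic alternating matrix `X`. -/
def xv (R₀ : Type u) [CommRing R₀] (f : ℕ) (i j : Fin f) : MvPolynomial (P2 f) R₀ :=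
  if h : i < j then MvPolynomial.X ⟨(i, j), h⟩
  else if h : j < i then - MvPolynomial.X ⟨(j, i), h⟩ else 0

/-- The Pfaffian of the principal `4 × 4` submatrix of `X` with rows and
columns `i < j < k < l`. -/
def pf4 (R₀ : Type u) [CommRing R₀] (f : ℕ) (i j k l : Fin f) : MvPolynomial (P2 f) R₀ :=
  xv R₀ f i j * xv R₀ f k l - xv R₀ f i k * xv R₀ f j l + xv R₀ f i l * xv R₀ f j k

/-- The ideal `Pf₄(X)` generated by all `4 × 4` principal Pfaffians of the
generic alternating matrix `X`. -/
def Pf4 (R₀ : Type u) [CommRing R₀] (f : ℕ) : Ideal (MvPolynomial (P2 f) R₀) :=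
  Ideal.span {p | ∃ i j k l : Fin f, i < j ∧ j < k ∧ k < l ∧ p = pf4 R₀ f i j k l}

/-- Index set of strictly increasing triples `i < j < k` in `Fin f`,
indexing a basis of `⋀³F`. -/
abbrev T3 (f : ℕ) := {v : Fin f × Fin f × Fin f // v.1 < v.2.1 ∧ v.2.1 < v.2.2}

/-- The quotient ring `A = R/Pf₄(X)`. -/
abbrev Aring (R₀ : Type u) [CommRing R₀] (f : ℕ) : Type u :=
  MvPolynomial (P2 f) R₀ ⧸ Pf4 R₀ f

/-- The generic alternating matrix with entries in `A`. -/
def XA (R₀ : Type u) [CommRing R₀] (f : ℕ) : Matrix (Fin f) (Fin f) (Aring R₀ f) :=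
  fun i j => Ideal.Quotient.mk _ (xv R₀ f i j)

/-- The matrix of `d₁ : ⋀³F̄* → F̄*` (contraction against
`ξ = Σ_{i<j} x_{i,j} e_i ∧ e_j`): the column indexed by `i < j < k` is
`(…, x_{j,k}, …, -x_{i,k}, …, x_{i,j}, …)ᵀ`. -/
def M1 (R₀ : Type u) [CommRing R₀] (f : ℕ) : Matrix (Fin f) (T3 f) (Aring R₀ f) :=
  fun i v =>
    if i = v.1.1 then XA R₀ f v.1.2.1 v.1.2.2
    else if i = v.1.2.1 then - XA R₀ f v.1.1 v.1.2.2
    else if i = v.1.2.2 then XA R₀ f v.1.1 v.1.2.1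
    else 0

/-!
Write `A n` for the quotient by the Pfaffians of the generic `n × n` alternating matrix. The map
`x_{i,j} ↦ a_i b_j - b_i a_j` kills all Pfaffians. Modulo the Pfaffians, the monomial
`x_{i,l} x_{j,k}` of a nested pair `i < j < k < l` equals `x_{i,k} x_{j,l} - x_{i,j} x_{k,l}`, which
decreases the sum of the squares `(j - i)²`; so the monomials without nested pairs span `A n`. Their
images have distinct lexicographic leading terms, so these standard monomials form a basis, and
`A n` embeds in the polynomial ring in the `a_i` and `b_j`. If a pair `p` is comparable to all
pairs, multiplication by `x_p` maps the standard basis injectively to itself; hence `x_p` is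
regular, and `x_p ∣ x_q u` implies `x_p ∣ u` whenever `q ≠ p` is another such pair.

The cokernel of `d₁` is the part of `A (n + 1)` of degree one in the variables `x_{i,c}` of an
additional index `c`: sending `x_{i,c}` to the class of the `i`-th basis vector in the square-zero
extension of `A n` by the cokernel respects the Plücker relations. A vector `v` in the kernel of
`d₀` or `δ₁` can therefore be studied in `A (n + 1)`, where the relations among three indices and
`c` give `x_{i,j} ∑ₖ v_k x_{k,c} = 0` in the first case, and in the second case
`x_{i,j} ∣ x_{s,t} (v_i x_{j,c} - v_j x_{i,c})`. For pairs comparable to all others, the factors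
`x_{i,j}` and `x_{s,t}` can be cancelled.
-/

open MvPolynomial

section MonicFamily

variable {σ ι R : Type*} [CommRing R] (ord : MonomialOrder σ) {p : ι → MvPolynomial σ R}

lemma linearIndependent_of_monic_of_injective_degree (hp : ∀ i, ord.Monic (p i))
    (hdeg : Function.Injective fun i => ord.degree (p i)) : LinearIndependent R p := by
  classical
  rw [linearIndependent_iff']
  intro s g hsum
  by_contra! hne
  obtain ⟨i₀, hi₀, hgi₀⟩ := hne
  obtain ⟨i, hi, hmax⟩ := Finset.exists_max_image (s.filter fun i => g i ≠ 0)
    (fun i => ord.toSyn (ord.degree (p i))) ⟨i₀, Finset.mem_filter.2 ⟨hi₀, hgi₀⟩⟩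
  obtain ⟨his, hgi⟩ := Finset.mem_filter.1 hi
  have hlower : ∀ j ∈ s, j ≠ i → coeff (ord.degree (p i)) (g j • p j) = 0 := by
    intro j hj hji
    by_cases hgj : g j = 0
    · rw [hgj, zero_smul, coeff_zero]
    · have hle := hmax j (Finset.mem_filter.2 ⟨hj, hgj⟩)
      have hlt := hle.lt_of_ne fun h => hji (hdeg (ord.toSyn.injective h))
      rw [coeff_smul, ord.coeff_eq_zero_of_lt hlt, smul_zero]
  apply hgi
  calc g i = coeff (ord.degree (p i)) (g i • p i) := by
        rw [coeff_smul, (hp i).coeff_degree, smul_eq_mul, mul_one]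
    _ = coeff (ord.degree (p i)) (∑ j ∈ s, g j • p j) := by
        rw [coeff_sum, Finset.sum_eq_single_of_mem i his hlower]
    _ = 0 := by rw [hsum, coeff_zero]

lemma degree_pow_of_monic [Nontrivial R] {q : MvPolynomial σ R} (hq : ord.Monic q) (k : ℕ) :
    ord.degree (q ^ k) = k • ord.degree q :=
  ord.degree_pow_of_pow_leadingCoeff_ne_zero <| by
    rw [hq.leadingCoeff_eq_one, one_pow]
    exact one_ne_zero

lemma degree_finsuppProd_of_monic [Nontrivial R] (hp : ∀ i, ord.Monic (p i)) (d : ι →₀ ℕ) :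
    ord.degree (d.prod fun i k => p i ^ k) = Finsupp.weight (fun i => ord.degree (p i)) d := by
  rw [Finsupp.prod, ord.degree_prod_of_regular, Finsupp.weight_apply, Finsupp.sum]
  · exact Finset.sum_congr rfl fun i _ => degree_pow_of_monic ord (hp i) (d i)
  · intro i _
    rw [(hp i).pow.leadingCoeff_eq_one]
    exact isRegular_one

end MonicFamily

/-- Alternating matrices whose `4 × 4` principal Pfaffians vanish, i.e. whose entries satisfy the
three-term Plücker relations. The relations are imposed for all quadruples of indices. -/
structure IsPlucker {ι B : Type*} [CommRing B] (Y : Matrix ι ι B) : Prop where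
  apply_self : ∀ i, Y i i = 0
  apply_swap : ∀ i j, Y j i = -Y i j
  plucker : ∀ i j k l, Y i j * Y k l - Y i k * Y j l + Y i l * Y j k = 0

lemma isPlucker_vecMulVec_sub {ι B : Type*} [CommRing B] (a b : ι → B) :
    IsPlucker (Matrix.vecMulVec a b - Matrix.vecMulVec b a) where
  apply_self i := by simp only [Matrix.sub_apply, Matrix.vecMulVec_apply]; ring
  apply_swap i j := by simp only [Matrix.sub_apply, Matrix.vecMulVec_apply]; ring
  plucker i j k l := by simp only [Matrix.sub_apply, Matrix.vecMulVec_apply]; ring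

lemma IsPlucker.submatrix {ι κ B : Type*} [CommRing B] {Y : Matrix ι ι B} (hY : IsPlucker Y)
    (e : κ → ι) : IsPlucker (Y.submatrix e e) where
  apply_self i := hY.apply_self (e i)
  apply_swap i j := hY.apply_swap (e i) (e j)
  plucker i j k l := hY.plucker (e i) (e j) (e k) (e l)

variable {R : Type u} [CommRing R] {n : ℕ}

lemma XA_apply_self (i : Fin n) : XA R n i i = 0 := by
  simp [XA, xv]

lemma XA_apply_swap (i j : Fin n) : XA R n j i = -XA R n i j := by
  rcases lt_trichotomy i j with h | rfl | h
  · simp [XA, xv, h, h.not_gt]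
  · simp [XA_apply_self]
  · simp [XA, xv, h, h.not_gt]

lemma XA_plucker_of_lt {i j k l : Fin n} (hij : i < j) (hjk : j < k) (hkl : k < l) :
    XA R n i j * XA R n k l - XA R n i k * XA R n j l + XA R n i l * XA R n j k = 0 := by
  have h : Ideal.Quotient.mk (Pf4 R n) (pf4 R n i j k l) = 0 :=
    Ideal.Quotient.eq_zero_iff_mem.2 (Ideal.subset_span ⟨i, j, k, l, hij, hjk, hkl, rfl⟩)
  simp only [pf4, map_add, map_sub, map_mul] at h
  exact h

lemma aeval_xv {B : Type*} [CommRing B] [Algebra R B] {Y : Matrix (Fin n) (Fin n) B}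
    (hself : ∀ i, Y i i = 0) (hswap : ∀ i j, Y j i = -Y i j) (i j : Fin n) :
    aeval (fun p : P2 n => Y p.1.1 p.1.2) (xv R n i j) = Y i j := by
  rcases lt_trichotomy i j with h | rfl | h
  · simp [xv, h]
  · simp [xv, hself]
  · simp [xv, h, h.not_gt, hswap j i]

namespace IsPlucker

variable {B : Type*} [CommRing B] [Algebra R B] {Y : Matrix (Fin n) (Fin n) B}

lemma aeval_eq_zero_of_mem_Pf4 (hY : IsPlucker Y) {q : MvPolynomial (P2 n) R} (hq : q ∈ Pf4 R n) :
    aeval (fun p : P2 n => Y p.1.1 p.1.2) q = 0 := by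
  induction hq using Submodule.span_induction with
  | mem q hq =>
    obtain ⟨i, j, k, l, -, -, -, rfl⟩ := hq
    simp only [pf4, map_add, map_sub, map_mul, aeval_xv hY.apply_self hY.apply_swap, hY.plucker]
  | zero => exact map_zero _
  | add _ _ _ _ h₁ h₂ => rw [map_add, h₁, h₂, add_zero]
  | smul a _ _ h => rw [smul_eq_mul, map_mul, h, mul_zero]

variable (R) in
/-- The universal property of `Aring`: a matrix satisfying the Plücker relations is a
specialization of the generic one. -/
def lift (hY : IsPlucker Y) : Aring R n →ₐ[R] B :=
  Ideal.Quotient.liftₐ (Pf4 R n) (aeval fun p : P2 n => Y p.1.1 p.1.2)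
    fun _ hq => hY.aeval_eq_zero_of_mem_Pf4 hq

lemma lift_XA (hY : IsPlucker Y) (i j : Fin n) : hY.lift R (XA R n i j) = Y i j :=
  aeval_xv hY.apply_self hY.apply_swap i j

end IsPlucker

lemma Aring_algHom_ext {B : Type*} [CommRing B] [Algebra R B] {φ ψ : Aring R n →ₐ[R] B}
    (h : ∀ i j, φ (XA R n i j) = ψ (XA R n i j)) : φ = ψ := by
  refine Ideal.Quotient.algHom_ext R (MvPolynomial.algHom_ext fun ⟨⟨i, j⟩, hij⟩ => ?_)
  simpa [XA, xv, show i < j from hij] using h i j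

section StandardMonomials

variable (R) in
/-- The image in `Aring R n` of the monomial with exponent `m`. -/
def xMonomial (m : P2 n →₀ ℕ) : Aring R n := Ideal.Quotient.mk _ (monomial m 1)

lemma xMonomial_add (m m' : P2 n →₀ ℕ) :
    xMonomial R (m + m') = xMonomial R m * xMonomial R m' := by
  rw [xMonomial, xMonomial, xMonomial, ← map_mul, monomial_mul, mul_one]

lemma xMonomial_single (p : P2 n) :
    xMonomial R (Finsupp.single p 1) = XA R n p.1.1 p.1.2 := by
  simp [xMonomial, XA, xv, p.2, X]

/-- Standard exponents: the support is a chain for the componentwise order on pairs, that is, no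
pair `(j, k)` in it is nested inside another pair `(i, l)`, `i < j < k < l`. -/
def IsStandard (m : P2 n →₀ ℕ) : Prop := IsChain (· ≤ ·) (m.support : Set (P2 n))

lemma IsStandard.of_add_left {m m' : P2 n →₀ ℕ} (h : IsStandard (m' + m)) : IsStandard m :=
  h.mono fun p hp => by
    simp only [Finset.mem_coe, Finsupp.mem_support_iff, Finsupp.add_apply] at hp ⊢
    lia

lemma IsStandard.single_add {m : P2 n →₀ ℕ} {p : P2 n} (hm : IsStandard m)
    (hp : ∀ q, p ≤ q ∨ q ≤ p) : IsStandard (Finsupp.single p 1 + m) := by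
  classical
  refine (hm.insert fun q _ _ => hp q).mono ?_
  intro q hq
  rcases Finset.mem_union.1 (Finsupp.support_add hq) with h | h
  · exact Or.inl (Finset.mem_singleton.1 (Finsupp.support_single_subset h))
  · exact Or.inr h

lemma exists_eq_single_add {α : Type*} {m : α →₀ ℕ} {p : α} (hp : p ∈ m.support) :
    ∃ m', m = Finsupp.single p 1 + m' := by
  rw [← le_iff_exists_add, Finsupp.single_le_iff]
  exact Nat.one_le_iff_ne_zero.2 (Finsupp.mem_support_iff.1 hp)

lemma exists_nested_of_not_isStandard {m : P2 n →₀ ℕ} (hm : ¬IsStandard m) :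
    ∃ p ∈ m.support, ∃ q ∈ m.support, p.1.1 < q.1.1 ∧ q.1.2 < p.1.2 := by
  simp only [IsStandard, IsChain, Set.Pairwise, not_forall, not_or] at hm
  obtain ⟨p, hp, q, hq, -, hpq, hqp⟩ := hm
  rw [← Subtype.coe_le_coe, Prod.le_def, not_and_or, not_le, not_le] at hpq hqp
  rcases hqp with h | h
  · exact ⟨p, hp, q, hq, h, hpq.resolve_left h.not_gt⟩
  · exact ⟨q, hq, p, hp, hpq.resolve_right h.not_gt, h⟩

/-- The termination measure of straightening: the sum of `(j - i)²` over the pairs `(i, j)`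
occurring in a monomial, with multiplicity. -/
def spread : (P2 n →₀ ℕ) →+ ℕ := Finsupp.weight fun p => ((p.1.2 : ℕ) - p.1.1) ^ 2

lemma spread_single (p : P2 n) : spread (Finsupp.single p 1) = ((p.1.2 : ℕ) - p.1.1) ^ 2 := by
  simp [spread, Finsupp.weight_single]

lemma sq_sub_add_sq_sub_lt_of_crossing {i j k l : ℕ} (hij : i < j) (hjk : j < k) (hkl : k < l) :
    (k - i) ^ 2 + (l - j) ^ 2 < (l - i) ^ 2 + (k - j) ^ 2 := by
  zify [hjk.le, (hij.trans hjk).le, (hjk.trans hkl).le, (hij.trans (hjk.trans hkl)).le] at *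
  nlinarith [mul_pos (sub_pos.2 hij) (sub_pos.2 hkl)]

lemma sq_sub_add_sq_sub_lt_of_disjoint {i j k l : ℕ} (hij : i < j) (hjk : j < k) (hkl : k < l) :
    (j - i) ^ 2 + (l - k) ^ 2 < (l - i) ^ 2 + (k - j) ^ 2 := by
  zify [hij.le, hjk.le, hkl.le, (hij.trans (hjk.trans hkl)).le] at *
  nlinarith [mul_pos (sub_pos.2 hij) (sub_pos.2 hjk), mul_pos (sub_pos.2 hij) (sub_pos.2 hkl),
    mul_pos (sub_pos.2 hjk) (sub_pos.2 hkl)]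

lemma xMonomial_nested {i j k l : Fin n} (hij : i < j) (hjk : j < k) (hkl : k < l)
    (m : P2 n →₀ ℕ) :
    xMonomial R (.single ⟨(i, l), hij.trans (hjk.trans hkl)⟩ 1 + (.single ⟨(j, k), hjk⟩ 1 + m)) =
      xMonomial R (.single ⟨(i, k), hij.trans hjk⟩ 1 + (.single ⟨(j, l), hjk.trans hkl⟩ 1 + m)) -
        xMonomial R (.single ⟨(i, j), hij⟩ 1 + (.single ⟨(k, l), hkl⟩ 1 + m)) := by
  simp only [xMonomial_add, xMonomial_single]
  linear_combination xMonomial R m * XA_plucker_of_lt (R := R) hij hjk hkl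

lemma xMonomial_mem_span_isStandard (m : P2 n →₀ ℕ) :
    xMonomial R m ∈ Submodule.span R (xMonomial R '' {m | IsStandard m}) := by
  induction hw : spread m using Nat.strong_induction_on generalizing m with
  | _ w ih =>
  subst hw
  by_cases hm : IsStandard m
  · exact Submodule.subset_span ⟨m, hm, rfl⟩
  obtain ⟨⟨⟨i, l⟩, hil⟩, hp, ⟨⟨j, k⟩, hjk⟩, hq, hij, hkl⟩ := exists_nested_of_not_isStandard hm
  dsimp only at hil hij hkl hjk
  obtain ⟨m, rfl⟩ := exists_eq_single_add hp
  obtain ⟨m, rfl⟩ : ∃ m', m = Finsupp.single ⟨(j, k), hjk⟩ 1 + m' := by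
    refine exists_eq_single_add ?_
    simpa [hij.ne'] using hq
  rw [xMonomial_nested hij hjk hkl]
  refine Submodule.sub_mem _ (ih _ ?_ _ rfl) (ih _ ?_ _ rfl)
  · simpa only [map_add, spread_single, ← add_assoc, add_lt_add_iff_right] using
      sq_sub_add_sq_sub_lt_of_crossing hij hjk hkl
  · simpa only [map_add, spread_single, ← add_assoc, add_lt_add_iff_right] using
      sq_sub_add_sq_sub_lt_of_disjoint hij hjk hkl

lemma span_isStandard_eq_top :
    Submodule.span R (Set.range fun m : {m : P2 n →₀ ℕ // IsStandard m} => xMonomial R m.1) =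
      ⊤ := by
  rw [eq_top_iff]
  rintro x -
  obtain ⟨q, rfl⟩ := Ideal.Quotient.mk_surjective x
  induction q using MvPolynomial.induction_on' with
  | monomial m a =>
    have h : Ideal.Quotient.mk (Pf4 R n) (monomial m a) = a • xMonomial R m := by
      rw [xMonomial, ← Ideal.Quotient.mkₐ_eq_mk R, ← map_smul, smul_monomial, smul_eq_mul, mul_one]
    rw [h, Set.range_comp' (xMonomial R), Subtype.range_coe_subtype]
    exact Submodule.smul_mem _ _ (xMonomial_mem_span_isStandard m)
  | add p q hp hq =>
    rw [map_add]
    exact Submodule.add_mem _ hp hq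

/-- The exponent of the leading monomial of the image of a monomial under
`x_{i,j} ↦ a_i b_j - b_i a_j`, for the lexicographic order in which the variables `a_i` (indexed by
`Sum.inlₗ i`) come before the `b_j` (indexed by `Sum.inrₗ j`). -/
def leadExp : (P2 n →₀ ℕ) →+ (Fin n ⊕ₗ Fin n →₀ ℕ) :=
  Finsupp.weight fun p => .single (Sum.inlₗ p.1.1) 1 + .single (Sum.inrₗ p.1.2) 1

lemma leadExp_inlₗ_ne_zero_iff {m : P2 n →₀ ℕ} {i : Fin n} :
    leadExp m (Sum.inlₗ i) ≠ 0 ↔ ∃ p ∈ m.support, p.1.1 = i := by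
  simp [leadExp, Finsupp.weight_apply, Finsupp.sum, Finsupp.single_apply, and_left_comm]

lemma leadExp_inrₗ_ne_zero_iff {m : P2 n →₀ ℕ} {j : Fin n} :
    leadExp m (Sum.inrₗ j) ≠ 0 ↔ ∃ p ∈ m.support, p.1.2 = j := by
  simp [leadExp, Finsupp.weight_apply, Finsupp.sum, Finsupp.single_apply, and_left_comm]

lemma le_of_leadExp_eq {m m' : P2 n →₀ ℕ} {p p' : P2 n} (h : leadExp m = leadExp m')
    (hp : ∀ q ∈ m.support, p ≤ q) (hp' : p' ∈ m'.support) : p ≤ p' := by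
  obtain ⟨q, hq, hqp'⟩ := leadExp_inlₗ_ne_zero_iff.1 <|
    h ▸ leadExp_inlₗ_ne_zero_iff.2 ⟨p', hp', rfl⟩
  obtain ⟨r, hr, hrp'⟩ := leadExp_inrₗ_ne_zero_iff.1 <|
    h ▸ leadExp_inrₗ_ne_zero_iff.2 ⟨p', hp', rfl⟩
  exact ⟨hqp' ▸ (hp q hq).1, hrp' ▸ (hp r hr).2⟩

lemma IsStandard.exists_least {m : P2 n →₀ ℕ} (hm : IsStandard m) (h : m ≠ 0) :
    ∃ p ∈ m.support, ∀ q ∈ m.support, p ≤ q := by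
  obtain ⟨p, hp⟩ := m.support.exists_minimal (Finsupp.support_nonempty_iff.2 h)
  refine ⟨p, hp.prop, fun q hq => ?_⟩
  exact (hm.total hp.prop hq).elim id fun hqp => hp.le_of_le hq hqp

lemma leadExp_eq_zero_iff {m : P2 n →₀ ℕ} : leadExp m = 0 ↔ m = 0 := by
  refine ⟨fun h => ?_, fun h => h ▸ map_zero _⟩
  by_contra hm
  obtain ⟨p, hp⟩ := Finsupp.support_nonempty_iff.2 hm
  exact leadExp_inlₗ_ne_zero_iff.2 ⟨p, hp, rfl⟩ (DFunLike.congr_fun h _)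

lemma IsStandard.eq_of_leadExp_eq {m m' : P2 n →₀ ℕ} (hm : IsStandard m) (hm' : IsStandard m')
    (h : leadExp m = leadExp m') : m = m' := by
  induction hd : m.degree using Nat.strong_induction_on generalizing m m' with
  | _ d ih =>
  subst hd
  by_cases h0 : m = 0
  · subst h0
    exact (leadExp_eq_zero_iff.1 (h.symm.trans (map_zero _))).symm
  have h0' : m' ≠ 0 := fun h' => h0 <| leadExp_eq_zero_iff.1 <| by rw [h, h', map_zero]
  obtain ⟨p, hp, hpm⟩ := hm.exists_least h0
  obtain ⟨p', hp', hpm'⟩ := hm'.exists_least h0'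
  obtain rfl : p = p' :=
    le_antisymm (le_of_leadExp_eq h hpm hp') (le_of_leadExp_eq h.symm hpm' hp)
  obtain ⟨t, rfl⟩ := exists_eq_single_add hp
  obtain ⟨t', rfl⟩ := exists_eq_single_add hp'
  rw [map_add, map_add] at h
  rw [ih t.degree (by simp) hm.of_add_left hm'.of_add_left (add_left_cancel h) rfl]

end StandardMonomials

section StandardBasis

/-- The universal matrix of rank two: the alternating matrix with entries `a_i b_j - b_i a_j`, where
`a_i` and `b_j` are the variables indexed by `Sum.inlₗ i` and `Sum.inrₗ j`. -/
def rankTwoMatrix (R : Type*) [CommRing R] (n : ℕ) :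
    Matrix (Fin n) (Fin n) (MvPolynomial (Fin n ⊕ₗ Fin n) R) :=
  Matrix.vecMulVec (fun i => X (Sum.inlₗ i)) (fun j => X (Sum.inrₗ j)) -
    Matrix.vecMulVec (fun i => X (Sum.inrₗ i)) (fun j => X (Sum.inlₗ j))

lemma isPlucker_rankTwoMatrix : IsPlucker (rankTwoMatrix R n) := isPlucker_vecMulVec_sub _ _

lemma rankTwoMatrix_apply (i j : Fin n) :
    rankTwoMatrix R n i j =
      monomial (.single (Sum.inlₗ i) 1 + .single (Sum.inrₗ j) 1) 1 -
        monomial (.single (Sum.inlₗ j) 1 + .single (Sum.inrₗ i) 1) 1 := by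
  simp [rankTwoMatrix, Matrix.vecMulVec_apply, X, monomial_mul, add_comm]

lemma lex_single_add_single_lt {i j : Fin n} (hij : i < j) :
    MonomialOrder.lex.toSyn (.single (Sum.inlₗ j) 1 + .single (Sum.inrₗ i) 1) <
      MonomialOrder.lex.toSyn
        (.single (Sum.inlₗ i) 1 + .single (Sum.inrₗ j) 1 : Fin n ⊕ₗ Fin n →₀ ℕ) := by
  rw [MonomialOrder.lex_lt_iff, Finsupp.Lex.lt_iff]
  refine ⟨Sum.inlₗ i, fun k hk => ?_, ?_⟩
  · have hkj : k ≠ Sum.inlₗ j := (hk.trans (Sum.Lex.inl_lt_inl_iff.2 hij)).ne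
    have hkr (l : Fin n) : k ≠ Sum.inrₗ l := (hk.trans (Sum.Lex.inl_lt_inr i l)).ne
    simp [hk.ne', hkj.symm, (hkr _).symm]
  · simp [hij.ne']

section Lex

variable [Nontrivial R] (p : P2 n)

lemma degree_rankTwoMatrix : MonomialOrder.lex.degree (rankTwoMatrix R n p.1.1 p.1.2) =
    .single (Sum.inlₗ p.1.1) 1 + .single (Sum.inrₗ p.1.2) 1 := by
  classical
  rw [rankTwoMatrix_apply, MonomialOrder.degree_sub_of_lt]
  all_goals simp only [MonomialOrder.degree_monomial, one_ne_zero, if_false]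
  exact lex_single_add_single_lt p.2

lemma monic_rankTwoMatrix : MonomialOrder.lex.Monic (rankTwoMatrix R n p.1.1 p.1.2) := by
  classical
  rw [MonomialOrder.Monic, rankTwoMatrix_apply, MonomialOrder.leadingCoeff_sub_of_lt]
  · exact MonomialOrder.leadingCoeff_monomial _
  · simp only [MonomialOrder.degree_monomial, one_ne_zero, if_false]
    exact lex_single_add_single_lt p.2

end Lex

variable (R n) in
/-- The specialization of the generic alternating matrix of rank two to `rankTwoMatrix R n`. -/
def toRankTwo : Aring R n →ₐ[R] MvPolynomial (Fin n ⊕ₗ Fin n) R := isPlucker_rankTwoMatrix.lift R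

lemma toRankTwo_xMonomial (m : P2 n →₀ ℕ) :
    toRankTwo R n (xMonomial R m) = m.prod fun p k => rankTwoMatrix R n p.1.1 p.1.2 ^ k := by
  refine (aeval_monomial _ _ _).trans ?_
  rw [map_one, one_mul]

lemma linearIndependent_toRankTwo_xMonomial :
    LinearIndependent R fun m : {m : P2 n →₀ ℕ // IsStandard m} =>
      toRankTwo R n (xMonomial R m.1) := by
  nontriviality R
  have hmonic (p : P2 n) := monic_rankTwoMatrix (R := R) p
  simp only [toRankTwo_xMonomial]
  refine linearIndependent_of_monic_of_injective_degree MonomialOrder.lex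
    (fun m => MonomialOrder.Monic.prod fun p _ => (hmonic p).pow) fun m m' h => ?_
  simp only [degree_finsuppProd_of_monic _ hmonic, degree_rankTwoMatrix] at h
  exact Subtype.ext (m.2.eq_of_leadExp_eq m'.2 h)

lemma linearIndependent_xMonomial :
    LinearIndependent R fun m : {m : P2 n →₀ ℕ // IsStandard m} => xMonomial R m.1 :=
  LinearIndependent.of_comp (toRankTwo R n).toLinearMap linearIndependent_toRankTwo_xMonomial

variable (R n) in
/-- The basis of `Aring R n` consisting of the standard monomials. -/
def standardBasis : Module.Basis {m : P2 n →₀ ℕ // IsStandard m} R (Aring R n) :=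
  .mk linearIndependent_xMonomial span_isStandard_eq_top.ge

lemma standardBasis_apply (m : {m : P2 n →₀ ℕ // IsStandard m}) :
    standardBasis R n m = xMonomial R m.1 := Module.Basis.mk_apply _ _ m

lemma toRankTwo_injective : Function.Injective (toRankTwo R n) := by
  have h : (toRankTwo R n).toLinearMap ∘ₗ (standardBasis R n).repr.symm.toLinearMap =
      Finsupp.linearCombination R
        fun m : {m : P2 n →₀ ℕ // IsStandard m} => toRankTwo R n (xMonomial R m.1) := by
    ext1 m
    ext1
    simp [standardBasis_apply]
  have hinj := linearIndependent_toRankTwo_xMonomial (R := R) (n := n)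
  rw [LinearIndependent, ← h] at hinj
  exact (EquivLike.injective_comp (standardBasis R n).repr.symm _).1 hinj

lemma isPlucker_XA : IsPlucker (XA R n) where
  apply_self := XA_apply_self
  apply_swap := XA_apply_swap
  plucker i j k l := toRankTwo_injective <| by
    simp only [map_add, map_sub, map_mul, map_zero, toRankTwo, IsPlucker.lift_XA]
    exact isPlucker_rankTwoMatrix.plucker i j k l

/-- Multiplication of standard exponents by `x_p`, for `p` comparable to every pair. -/
def standardShift (p : P2 n) (hp : ∀ q, p ≤ q ∨ q ≤ p) (m : {m : P2 n →₀ ℕ // IsStandard m}) :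
    {m : P2 n →₀ ℕ // IsStandard m} :=
  ⟨.single p 1 + m.1, m.2.single_add hp⟩

lemma standardShift_injective (p : P2 n) (hp : ∀ q, p ≤ q ∨ q ≤ p) :
    Function.Injective (standardShift p hp) := fun _ _ h =>
  Subtype.ext (add_left_cancel (congrArg Subtype.val h))

variable {p q : P2 n}

lemma standardBasis_repr_XA_mul (hp : ∀ q, p ≤ q ∨ q ≤ p) (u : Aring R n) :
    (standardBasis R n).repr (XA R n p.1.1 p.1.2 * u) =
      ((standardBasis R n).repr u).mapDomain (standardShift p hp) := by
  have h : (standardBasis R n).repr.toLinearMap ∘ₗ LinearMap.mulLeft R (XA R n p.1.1 p.1.2) =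
      Finsupp.lmapDomain R R (standardShift p hp) ∘ₗ (standardBasis R n).repr.toLinearMap := by
    refine (standardBasis R n).ext fun m => ?_
    have hm : XA R n p.1.1 p.1.2 * standardBasis R n m =
        standardBasis R n (standardShift p hp m) := by
      simp only [standardBasis_apply, standardShift, xMonomial_add, xMonomial_single]
    simp [hm]
  exact DFunLike.congr_fun h u

lemma isLeftRegular_XA (hp : ∀ q, p ≤ q ∨ q ≤ p) : IsLeftRegular (XA R n p.1.1 p.1.2) := by
  intro u v huv
  have h := congrArg (standardBasis R n).repr huv
  simp only [standardBasis_repr_XA_mul hp] at h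
  exact (standardBasis R n).repr.injective
    (Finsupp.mapDomain_injective (standardShift_injective p hp) h)

lemma XA_dvd_of_repr_eq_zero {u : Aring R n}
    (hu : ∀ m, m.1 p = 0 → (standardBasis R n).repr u m = 0) : XA R n p.1.1 p.1.2 ∣ u := by
  rw [← (standardBasis R n).linearCombination_repr u, Finsupp.linearCombination_apply]
  refine Finset.dvd_sum fun m _ => ?_
  dsimp only
  by_cases hm : m.1 p = 0
  · rw [hu m hm, zero_smul]
    exact dvd_zero _
  · obtain ⟨m', hm'⟩ := exists_eq_single_add (Finsupp.mem_support_iff.2 hm)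
    rw [standardBasis_apply, hm', xMonomial_add, xMonomial_single]
    exact dvd_smul_of_dvd _ (dvd_mul_right _ _)

lemma repr_eq_zero_of_XA_dvd (hp : ∀ q, p ≤ q ∨ q ≤ p) {u : Aring R n}
    (hu : XA R n p.1.1 p.1.2 ∣ u) {m : {m : P2 n →₀ ℕ // IsStandard m}} (hm : m.1 p = 0) :
    (standardBasis R n).repr u m = 0 := by
  obtain ⟨v, rfl⟩ := hu
  rw [standardBasis_repr_XA_mul hp]
  refine Finsupp.mapDomain_of_notMem_range _ _ ?_
  rintro ⟨m', rfl⟩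
  simp [standardShift] at hm

lemma XA_dvd_of_dvd_mul (hp : ∀ r, p ≤ r ∨ r ≤ p) (hq : ∀ r, q ≤ r ∨ r ≤ q) (hpq : p ≠ q)
    {u : Aring R n} (h : XA R n p.1.1 p.1.2 ∣ XA R n q.1.1 q.1.2 * u) :
    XA R n p.1.1 p.1.2 ∣ u := by
  refine XA_dvd_of_repr_eq_zero fun m hm => ?_
  rw [← Finsupp.mapDomain_apply (standardShift_injective q hq) _ m, ← standardBasis_repr_XA_mul hq]
  exact repr_eq_zero_of_XA_dvd hp h <| by simp [standardShift, hm, hpq]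

end StandardBasis

section WedgeEqZero

variable {ι B N : Type*} [CommRing B] [AddCommGroup N] [Module B N] {Y : Matrix ι ι B} {e : ι → N}

/-- The vectors `e` with `e ∧ Y = 0`, where the alternating matrix `Y` is viewed as a bivector and
`e` has coordinates in a module. -/
def WedgeEqZero (Y : Matrix ι ι B) (e : ι → N) : Prop :=
  ∀ i j k, Y j k • e i - Y i k • e j + Y i j • e k = 0

lemma wedgeEqZero_of_lt [LinearOrder ι] (hself : ∀ i, Y i i = 0) (hswap : ∀ i j, Y j i = -Y i j)
    (h : ∀ i j k, i < j → j < k → Y j k • e i - Y i k • e j + Y i j • e k = 0) :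
    WedgeEqZero Y e := by
  have hle i j k (hij : i ≤ j) (hjk : j ≤ k) : Y j k • e i - Y i k • e j + Y i j • e k = 0 := by
    rcases hij.eq_or_lt with rfl | hij
    · simp [hself]
    rcases hjk.eq_or_lt with rfl | hjk
    · simp [hself]
    exact h i j k hij hjk
  have hleft i j k (h : Y j k • e i - Y i k • e j + Y i j • e k = 0) :
      Y i k • e j - Y j k • e i + Y j i • e k = 0 := by
    rw [hswap i j, ← neg_eq_zero, ← h]
    module
  have hright i j k (h : Y j k • e i - Y i k • e j + Y i j • e k = 0) :
      Y k j • e i - Y i j • e k + Y i k • e j = 0 := by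
    rw [hswap j k, ← neg_eq_zero, ← h]
    module
  intro i j k
  wlog hij : i ≤ j generalizing i j
  · exact hleft _ _ _ (this j i (le_of_not_ge hij))
  rcases le_total j k with hjk | hkj
  · exact hle i j k hij hjk
  rcases le_total i k with hik | hki
  · exact hright _ _ _ (hle i k j hik hkj)
  · exact hright _ _ _ (hleft _ _ _ (hle k i j hki hij))

lemma IsPlucker.wedgeEqZero_row (hY : IsPlucker Y) (i : ι) : WedgeEqZero Y (Y i) := fun j k l => by
  rw [smul_eq_mul, smul_eq_mul, smul_eq_mul, ← hY.plucker i j k l]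
  ring

end WedgeEqZero

section BorderedMatrix

variable {B N : Type*} [CommRing B] [AddCommGroup N] (c : Fin (n + 1))
  (Y : Matrix (Fin n) (Fin n) B) (e : Fin n → N)

/-- The alternating matrix over the square-zero extension of `B` by `N` that is obtained by
bordering `Y`, at the index `c`, with a column of infinitesimal entries `e`. -/
def borderedMatrix : Matrix (Fin (n + 1)) (Fin (n + 1)) (TrivSqZeroExt B N) :=
  Matrix.of <| c.insertNth (c.insertNth 0 fun j => -.inr (e j))
    fun i => c.insertNth (.inr (e i)) fun j => .inl (Y i j)

lemma borderedMatrix_apply_self : borderedMatrix c Y e c c = 0 := by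
  simp [borderedMatrix]

lemma borderedMatrix_self_succAbove (j : Fin n) :
    borderedMatrix c Y e c (c.succAbove j) = -.inr (e j) := by
  simp [borderedMatrix]

lemma borderedMatrix_succAbove_self (i : Fin n) :
    borderedMatrix c Y e (c.succAbove i) c = .inr (e i) := by
  simp [borderedMatrix]

lemma borderedMatrix_succAbove_succAbove (i j : Fin n) :
    borderedMatrix c Y e (c.succAbove i) (c.succAbove j) = .inl (Y i j) := by
  simp [borderedMatrix]

variable {Y e} [Module B N] [Module Bᵐᵒᵖ N] [IsCentralScalar B N]

lemma IsPlucker.borderedMatrix (hY : IsPlucker Y) (he : WedgeEqZero Y e) :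
    IsPlucker (borderedMatrix c Y e) where
  apply_self := by
    simp [Fin.forall_iff_succAbove c, borderedMatrix_apply_self,
      borderedMatrix_succAbove_succAbove, hY.apply_self]
  apply_swap := by
    have hswap (i j : Fin n) : (.inl (Y j i) : TrivSqZeroExt B N) = -.inl (Y i j) := by
      rw [hY.apply_swap, TrivSqZeroExt.inl_neg]
    simpa [Fin.forall_iff_succAbove c, borderedMatrix_apply_self, borderedMatrix_self_succAbove,
      borderedMatrix_succAbove_self, borderedMatrix_succAbove_succAbove] using hswap
  plucker := by
    simp only [Fin.forall_iff_succAbove c, borderedMatrix_apply_self,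
      borderedMatrix_self_succAbove, borderedMatrix_succAbove_self,
      borderedMatrix_succAbove_succAbove, TrivSqZeroExt.ext_iff, TrivSqZeroExt.fst_add,
      TrivSqZeroExt.fst_sub, TrivSqZeroExt.fst_mul, TrivSqZeroExt.fst_neg, TrivSqZeroExt.fst_zero,
      TrivSqZeroExt.fst_inl, TrivSqZeroExt.fst_inr, TrivSqZeroExt.snd_add, TrivSqZeroExt.snd_sub,
      TrivSqZeroExt.snd_mul, TrivSqZeroExt.snd_neg, TrivSqZeroExt.snd_zero, TrivSqZeroExt.snd_inl,
      TrivSqZeroExt.snd_inr, op_smul_eq_smul, mul_zero, zero_mul, smul_zero, zero_smul, smul_neg,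
      neg_zero, neg_eq_zero, zero_sub, sub_zero, sub_self, zero_add, add_zero, sub_neg_eq_add,
      neg_add_cancel, add_neg_cancel, neg_add_rev, add_neg_add_add_cancel, implies_true, and_self,
      true_and, and_true]
    refine ⟨fun i j k => ?_, fun i => ⟨fun j k => ?_, fun j => ⟨fun k => ?_, fun k => ⟨?_, ?_⟩⟩⟩⟩
    · linear_combination (norm := module) -he i j k
    · linear_combination (norm := module) he i j k
    · linear_combination (norm := module) -he i j k
    · linear_combination (norm := module) he i j k
    · exact hY.plucker i j k

end BorderedMatrix

section M1

lemma M1_col {i j k : Fin n} (hij : i < j) (hjk : j < k) :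
    (M1 R n).col ⟨(i, j, k), hij, hjk⟩ =
      Pi.single i (XA R n j k) - Pi.single j (XA R n i k) + Pi.single k (XA R n i j) := by
  ext l
  simp only [Matrix.col_apply, Pi.add_apply, Pi.sub_apply, Pi.single_apply]
  grind [M1]

lemma sum_M1_smul {N : Type*} [AddCommGroup N] [Module (Aring R n) N] (e : Fin n → N)
    {i j k : Fin n} (hij : i < j) (hjk : j < k) :
    ∑ l, M1 R n l ⟨(i, j, k), hij, hjk⟩ • e l =
      XA R n j k • e i - XA R n i k • e j + XA R n i j • e k := by
  change Fintype.linearCombination (Aring R n) e ((M1 R n).col ⟨(i, j, k), hij, hjk⟩) = _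
  rw [M1_col hij hjk, map_add, map_sub]
  simp only [Fintype.linearCombination_apply_single]

lemma wedgeEqZero_XA_iff {N : Type*} [AddCommGroup N] [Module (Aring R n) N] {e : Fin n → N} :
    WedgeEqZero (XA R n) e ↔ ∀ t, ∑ l, M1 R n l t • e l = 0 := by
  refine ⟨fun h ⟨⟨i, j, k⟩, hij, hjk⟩ => ?_, fun h => ?_⟩
  · rw [sum_M1_smul e hij hjk, h i j k]
  · refine wedgeEqZero_of_lt XA_apply_self XA_apply_swap fun i j k hij hjk => ?_
    rw [← sum_M1_smul e hij hjk, h]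

lemma wedgeEqZero_XA_iff_mulVec {v : Fin n → Aring R n} :
    WedgeEqZero (XA R n) v ↔ (M1 R n).transpose.mulVec v = 0 := by
  rw [wedgeEqZero_XA_iff, funext_iff]
  rfl

lemma XA_mul_M1 : XA R n * M1 R n = 0 := by
  ext i t
  rw [Matrix.mul_apply, Matrix.zero_apply,
    ← wedgeEqZero_XA_iff.1 (isPlucker_XA.wedgeEqZero_row i) t]
  exact Finset.sum_congr rfl fun l _ => mul_comm _ _

lemma M1_transpose_mul_XA : (M1 R n).transpose * XA R n = 0 := by
  have h : XA R n = -(XA R n).transpose := Matrix.ext fun i j => XA_apply_swap j i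
  rw [h, Matrix.mul_neg, ← Matrix.transpose_mul, XA_mul_M1, Matrix.transpose_zero, neg_zero]

variable (R n) in
/-- The cokernel of `d₁`. -/
abbrev CokerD1 : Type u := (Fin n → Aring R n) ⧸ LinearMap.range (M1 R n).mulVecLin

-- Needed for `TrivSqZeroExt`; the default search through the quotients times out.
instance : Module (Aring R n)ᵐᵒᵖ (CokerD1 R n) := Submodule.Quotient.module' _

variable (R) in
/-- The classes of the standard basis vectors in the cokernel of `d₁`. -/
def cokerGen (i : Fin n) : CokerD1 R n := Submodule.Quotient.mk (Pi.single i 1)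

lemma sum_smul_cokerGen (v : Fin n → Aring R n) :
    ∑ i, v i • cokerGen R i = Submodule.Quotient.mk v := by
  conv_rhs => rw [pi_eq_sum_univ' v]
  exact (map_sum (LinearMap.range (M1 R n).mulVecLin).mkQ _ _).symm

lemma wedgeEqZero_cokerGen : WedgeEqZero (XA R n) (cokerGen R) := by
  refine wedgeEqZero_XA_iff.2 fun t => ?_
  rw [sum_smul_cokerGen fun i => M1 R n i t, Submodule.Quotient.mk_eq_zero]
  exact ⟨Pi.single t 1, (M1 R n).mulVec_single_one t⟩

end M1

section Exactness

variable (c : Fin (n + 1))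

variable (R) in
/-- The ring homomorphism that identifies the generic matrix with a submatrix of the one with an
additional index `c`. -/
def addIndex : Aring R n →ₐ[R] Aring R (n + 1) := (isPlucker_XA.submatrix c.succAbove).lift R

lemma addIndex_XA (i j : Fin n) :
    addIndex R c (XA R n i j) = XA R (n + 1) (c.succAbove i) (c.succAbove j) :=
  IsPlucker.lift_XA _ i j

section SquareZero

variable {N : Type*} [AddCommGroup N] [Module (Aring R n) N] [Module (Aring R n)ᵐᵒᵖ N]
  [IsCentralScalar (Aring R n) N] [Module R N] [IsScalarTower R (Aring R n) N]
  [IsScalarTower R (Aring R n)ᵐᵒᵖ N] {e : Fin n → N} (he : WedgeEqZero (XA R n) e)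

/-- The specialization of the variables with additional index `c` to the infinitesimal elements
`e i`, over the identity on the other variables. -/
def toSquareZero : Aring R (n + 1) →ₐ[R] TrivSqZeroExt (Aring R n) N :=
  (isPlucker_XA.borderedMatrix c he).lift R

lemma toSquareZero_XA (j : Fin n) :
    toSquareZero c he (XA R (n + 1) (c.succAbove j) c) = .inr (e j) := by
  rw [toSquareZero, IsPlucker.lift_XA, borderedMatrix_succAbove_self]

lemma toSquareZero_addIndex (a : Aring R n) : toSquareZero c he (addIndex R c a) = .inl a := by
  have h : (toSquareZero c he).comp (addIndex R c) = TrivSqZeroExt.inlAlgHom R _ _ := by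
    refine Aring_algHom_ext fun i j => ?_
    rw [AlgHom.comp_apply, addIndex_XA, toSquareZero, IsPlucker.lift_XA,
      borderedMatrix_succAbove_succAbove]
    rfl
  exact DFunLike.congr_fun h a

lemma sum_smul_eq_zero_of_sum_addIndex_mul_XA_eq_zero (he : WedgeEqZero (XA R n) e)
    {v : Fin n → Aring R n}
    (h : ∑ k, addIndex R c (v k) * XA R (n + 1) (c.succAbove k) c = 0) :
    ∑ k, v k • e k = 0 := by
  have h' := congrArg (fun x => (toSquareZero c he x).snd) h
  simpa only [map_sum, map_mul, toSquareZero_addIndex, toSquareZero_XA, TrivSqZeroExt.inl_mul_inr,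
    TrivSqZeroExt.snd_sum, TrivSqZeroExt.snd_inr, map_zero, TrivSqZeroExt.snd_zero] using h'

lemma exists_smul_sub_smul_eq_XA_smul (he : WedgeEqZero (XA R n) e) {v : Fin n → Aring R n}
    {i j : Fin n}
    (h : XA R (n + 1) (c.succAbove i) (c.succAbove j) ∣
      addIndex R c (v i) * XA R (n + 1) (c.succAbove j) c -
        addIndex R c (v j) * XA R (n + 1) (c.succAbove i) c) :
    ∃ x, v i • e j - v j • e i = XA R n i j • x := by
  obtain ⟨m, hm⟩ := h
  have h' := congrArg (fun x => (toSquareZero c he x).snd) hm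
  rw [← addIndex_XA] at h'
  simp only [map_sub, map_mul, toSquareZero_addIndex, toSquareZero_XA, TrivSqZeroExt.inl_mul_inr,
    TrivSqZeroExt.snd_sub, TrivSqZeroExt.snd_inr, TrivSqZeroExt.snd_mul, TrivSqZeroExt.fst_inl,
    TrivSqZeroExt.snd_inl, smul_zero, add_zero] at h'
  exact ⟨_, h'⟩

end SquareZero

lemma mem_range_of_XA_mulVec_eq_zero {i j : Fin n}
    (hreg : IsLeftRegular (XA R (n + 1) (c.succAbove i) (c.succAbove j)))
    {v : Fin n → Aring R n} (hv : (XA R n).mulVec v = 0) :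
    v ∈ LinearMap.range (M1 R n).mulVecLin := by
  rw [← Submodule.Quotient.mk_eq_zero, ← sum_smul_cokerGen]
  refine sum_smul_eq_zero_of_sum_addIndex_mul_XA_eq_zero c wedgeEqZero_cokerGen
    (hreg.mul_left_eq_zero_iff.1 ?_)
  have hrow (l : Fin n) :
      ∑ k, XA R (n + 1) (c.succAbove l) (c.succAbove k) * addIndex R c (v k) = 0 := by
    simpa only [Matrix.mulVec, dotProduct, map_sum, map_mul, addIndex_XA, Pi.zero_apply, map_zero]
      using congrArg (addIndex R c) (congrFun hv l)
  calc
    _ = ∑ k, (XA R (n + 1) (c.succAbove i) (c.succAbove k) * addIndex R c (v k) *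
            XA R (n + 1) (c.succAbove j) c -
          XA R (n + 1) (c.succAbove j) (c.succAbove k) * addIndex R c (v k) *
            XA R (n + 1) (c.succAbove i) c) := by
      rw [Finset.mul_sum]
      refine Finset.sum_congr rfl fun k _ => ?_
      linear_combination addIndex R c (v k) *
        (isPlucker_XA (R := R)).plucker (c.succAbove i) (c.succAbove j) (c.succAbove k) c
    _ = 0 := by
      rw [Finset.sum_sub_distrib, ← Finset.sum_mul, ← Finset.sum_mul, hrow, hrow]
      ring

lemma XA_dvd_of_wedgeEqZero {v : Fin n → Aring R n} (hv : WedgeEqZero (XA R n) v)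
    (i j s t : Fin n) :
    XA R (n + 1) (c.succAbove i) (c.succAbove j) ∣
      XA R (n + 1) (c.succAbove s) (c.succAbove t) *
        (addIndex R c (v i) * XA R (n + 1) (c.succAbove j) c -
          addIndex R c (v j) * XA R (n + 1) (c.succAbove i) c) := by
  have hwedge (l : Fin n) := congrArg (addIndex R c) (hv l s t)
  simp only [smul_eq_mul, map_add, map_sub, map_mul, addIndex_XA, map_zero] at hwedge
  refine ⟨addIndex R c (v s) * XA R (n + 1) (c.succAbove t) c -
    addIndex R c (v t) * XA R (n + 1) (c.succAbove s) c, ?_⟩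
  have hplucker (l : Fin n) :=
    (isPlucker_XA (R := R)).plucker (c.succAbove i) (c.succAbove j) (c.succAbove l) c
  linear_combination XA R (n + 1) (c.succAbove j) c * hwedge i -
    XA R (n + 1) (c.succAbove i) c * hwedge j - addIndex R c (v s) * hplucker t +
    addIndex R c (v t) * hplucker s

lemma exists_XA_mulVec_eq_of_wedgeEqZero {i j s t : Fin n} (hreg : IsLeftRegular (XA R n i j))
    (hdvd : ∀ u, XA R (n + 1) (c.succAbove i) (c.succAbove j) ∣
      XA R (n + 1) (c.succAbove s) (c.succAbove t) * u →
        XA R (n + 1) (c.succAbove i) (c.succAbove j) ∣ u)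
    {v : Fin n → Aring R n} (hv : WedgeEqZero (XA R n) v) : ∃ w, (XA R n).mulVec w = v := by
  obtain ⟨x, hx⟩ := exists_smul_sub_smul_eq_XA_smul c wedgeEqZero_cokerGen
    (hdvd _ (XA_dvd_of_wedgeEqZero c hv i j s t))
  obtain ⟨w, rfl⟩ := Submodule.Quotient.mk_surjective _ x
  obtain ⟨y, hy⟩ := (Submodule.Quotient.eq _).1 hx
  refine ⟨w, funext fun l => hreg ?_⟩
  have hzero := congrArg (XA R n).mulVec hy
  rw [Matrix.mulVecLin_apply, Matrix.mulVec_mulVec, XA_mul_M1, Matrix.zero_mulVec] at hzero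
  have hl := congrFun hzero l
  simp only [Matrix.mulVec_sub, Matrix.mulVec_smul, Matrix.mulVec_single_one, Pi.sub_apply,
    Pi.smul_apply, Matrix.col_apply, smul_eq_mul, Pi.zero_apply] at hl
  have hwedge := hv i j l
  simp only [smul_eq_mul] at hwedge
  have hswap (k : Fin n) : XA R n l k = -XA R n k l := XA_apply_swap k l
  linear_combination hl - hwedge + v i * hswap j - v j * hswap i

lemma le_or_le_of_val_eq_zero_of_val_le_two {p : P2 n} (h₁ : p.1.1.val = 0) (h₂ : p.1.2.val ≤ 2)
    (q : P2 n) : p ≤ q ∨ q ≤ p := by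
  have hq := Fin.lt_def.1 q.2
  simp only [← Subtype.coe_le_coe, Prod.le_def, Fin.le_def]
  lia

lemma exact_M1_XA (hn : 2 ≤ n) :
    Function.Exact (M1 R n).mulVecLin (-(XA R n)).mulVecLin := by
  refine fun v => ⟨fun hv => ?_, ?_⟩
  · let p : P2 n := ⟨(⟨0, by lia⟩, ⟨1, by lia⟩), by simp⟩
    let p' : P2 (n + 1) := ⟨(p.1.1.castSucc, p.1.2.castSucc), p.2⟩
    have hreg : IsLeftRegular (XA R (n + 1) p'.1.1 p'.1.2) :=
      isLeftRegular_XA (le_or_le_of_val_eq_zero_of_val_le_two rfl (by simp [p', p]))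
    simp only [p', ← Fin.succAbove_last] at hreg
    refine mem_range_of_XA_mulVec_eq_zero _ hreg ?_
    rwa [Matrix.mulVecLin_apply, Matrix.neg_mulVec, neg_eq_zero] at hv
  · rintro ⟨w, rfl⟩
    rw [Matrix.mulVecLin_apply, Matrix.mulVecLin_apply, Matrix.mulVec_mulVec, Matrix.neg_mul,
      XA_mul_M1, neg_zero, Matrix.zero_mulVec]

lemma exact_XA_M1_transpose (hn : 3 ≤ n) :
    Function.Exact (-(XA R n)).mulVecLin (M1 R n).transpose.mulVecLin := by
  refine fun v => ⟨fun hv => ?_, ?_⟩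
  · let p : P2 n := ⟨(⟨0, by lia⟩, ⟨1, by lia⟩), by simp⟩
    let q : P2 n := ⟨(⟨0, by lia⟩, ⟨2, by lia⟩), by simp⟩
    let p' : P2 (n + 1) := ⟨(p.1.1.castSucc, p.1.2.castSucc), p.2⟩
    let q' : P2 (n + 1) := ⟨(q.1.1.castSucc, q.1.2.castSucc), q.2⟩
    have hdvd : ∀ u, XA R (n + 1) p'.1.1 p'.1.2 ∣ XA R (n + 1) q'.1.1 q'.1.2 * u →
        XA R (n + 1) p'.1.1 p'.1.2 ∣ u := fun u =>
      XA_dvd_of_dvd_mul (le_or_le_of_val_eq_zero_of_val_le_two rfl (by simp [p', p]))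
        (le_or_le_of_val_eq_zero_of_val_le_two rfl (by simp [q', q])) (by simp [p', q', p, q])
    simp only [p', q', ← Fin.succAbove_last] at hdvd
    have hreg : IsLeftRegular (XA R n p.1.1 p.1.2) :=
      isLeftRegular_XA (le_or_le_of_val_eq_zero_of_val_le_two rfl (by simp [p]))
    obtain ⟨w, hw⟩ :=
      exists_XA_mulVec_eq_of_wedgeEqZero _ hreg hdvd (wedgeEqZero_XA_iff_mulVec.2 hv)
    exact ⟨-w, by rw [Matrix.mulVecLin_apply, Matrix.neg_mulVec_neg, hw]⟩
  · rintro ⟨w, rfl⟩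
    rw [Matrix.mulVecLin_apply, Matrix.mulVecLin_apply, Matrix.mulVec_mulVec, Matrix.mul_neg,
      M1_transpose_mul_XA, neg_zero, Matrix.zero_mulVec]

end Exactness

theorem stmt_8_general (R₀ : Type u) [CommRing R₀] (f : ℕ) (hf : 3 ≤ f) :
    letI A := Aring R₀ f
    letI d1 : (T3 f → A) →ₗ[A] (Fin f → A) := (M1 R₀ f).mulVecLin
    letI d0 : (Fin f → A) →ₗ[A] (Fin f → A) := (-(XA R₀ f)).mulVecLin
    letI δ1 : (Fin f → A) →ₗ[A] (T3 f → A) := (Matrix.transpose (M1 R₀ f)).mulVecLin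
    Function.Exact d1 d0 ∧ Function.Exact d0 δ1 :=
  ⟨exact_M1_XA (by lia), exact_XA_M1_transpose hf⟩

/-- for a domain `R₀` and `f ≥ 4`, the complex
`⋀³F̄* --d₁--> F̄* --d₀--> F̄ --δ₁--> ⋀³F̄` over `A = R/Pf₄(X)` is exact, where
(in coordinates) the matrix of `d₀` is `-X` and the matrix of `δ₁` is the
transpose of the matrix of `d₁`. -/
theorem stmt_8 (R₀ : Type u) [CommRing R₀] [IsDomain R₀] (f : ℕ) (hf : 4 ≤ f) :
    letI A := Aring R₀ f
    letI d1 : (T3 f → A) →ₗ[A] (Fin f → A) := (M1 R₀ f).mulVecLin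
    letI d0 : (Fin f → A) →ₗ[A] (Fin f → A) := (-(XA R₀ f)).mulVecLin
    letI δ1 : (Fin f → A) →ₗ[A] (T3 f → A) := (Matrix.transpose (M1 R₀ f)).mulVecLin
    Function.Exact d1 d0 ∧ Function.Exact d0 δ1 :=
  stmt_8_general R₀ f (by lia)

end AluffiStmt
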